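/- arXiv:1207.1293 — 2 statements merged into one kernel-verified Lean document; each statement's English description precedes it below -/
import Mathlib

section
/- Let μ and ν be Borel probability measures on ℝ^d, 1 < p < q < ∞, η₀ > 0, τ > 0, R > 0 with ν(B(0,R)) > 2^{-p}, and M > 0 with ∫_{ℝ^d} exp( q|x|² / (2η₀(p−1)τ) ) dν(x) ≤ M. Let T be a map sending each f ∈ C_b(ℝ^d) to a Borel measurable function Tf on ℝ^d such that: (Harnack inequality) |(Tf)(x)|^p ≤ (T(|f|^p))(y) · exp( p|x−y|² / (4(p−1)η₀τ) ) for every f ∈ C_b(ℝ^d) and all x, y ∈ ℝ^d; (invariance) ∫_{ℝ^d} T g dν = ∫_{ℝ^d} g dμ for every nonnegative g ∈ C_b(ℝ^d). Then for every f ∈ C_b(ℝ^d), ∫_{ℝ^d} |Tf|^q dν ≤ 2^q exp( qR² / (2η₀(p−1)τ) ) · M · ‖f‖_{p,μ}^q. -/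
open MeasureTheory

/-- `f : ℝ^d → ℝ` is bounded and continuous. -/
def Cb {d : ℕ} (f : EuclideanSpace ℝ (Fin d) → ℝ) : Prop :=
  Continuous f ∧ ∃ M, ∀ x, |f x| ≤ M

/-!
Averaging the Harnack inequality in `y` over the ball `B(0, R)`, which carries `ν`-mass at least
`2^{-p}`, and using `|x - y|² ≤ 2 (|x|² + |y|²)`, bounds `|T f x|` by
`2 (∫ T (|f|^p) dν)^{1/p} exp ((|x|² + R²) / s)` with `s = 2 η₀ (p - 1) τ`. The `q`-th power of
this bound is integrated with the exponential moment of `ν`, and invariance turns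
`∫ T (|f|^p) dν` into `∫ |f|^p dμ`. That `T (|f|^p)` is `ν`-integrable follows from the Harnack
inequality for `|f|^p` itself at `y = 0`.
-/

section Harnack

open Real

variable {E : Type*} [SeminormedAddCommGroup E] {u v : E → ℝ} {p q s R M : ℝ}

theorem nonneg_of_abs_rpow_le_mul_exp {a b t : ℝ} (h : |a| ^ p ≤ b * exp t) : 0 ≤ b :=
  nonneg_of_mul_nonneg_left ((rpow_nonneg (abs_nonneg a) p).trans h) (exp_pos t)

theorem abs_le_of_abs_rpow_le_mul_exp {a C t : ℝ} (hp : 0 < p)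
    (h : |a| ^ p ≤ C * exp (p * t)) : |a| ≤ C ^ (1 / p) * exp t := by
  have hC : 0 ≤ C := nonneg_of_abs_rpow_le_mul_exp h
  refine (rpow_le_rpow_iff (abs_nonneg a) (by positivity) hp).mp (h.trans_eq ?_)
  rw [mul_rpow (by positivity) (exp_pos t).le, ← rpow_mul hC, one_div_mul_cancel hp.ne',
    rpow_one, ← exp_mul, mul_comm t]

theorem norm_sub_sq_le_two_mul (x y : E) : ‖x - y‖ ^ 2 ≤ 2 * (‖x‖ ^ 2 + ‖y‖ ^ 2) :=
  calc ‖x - y‖ ^ 2 ≤ (‖x‖ + ‖y‖) ^ 2 := by gcongr; exact norm_sub_le x y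
    _ ≤ 2 * (‖x‖ ^ 2 + ‖y‖ ^ 2) := add_sq_le

theorem exp_norm_sub_sq_le_of_mem_ball (hp : 0 ≤ p) (hs : 0 ≤ s) (x : E) {y : E}
    (hy : y ∈ Metric.ball 0 R) :
    exp (p * ‖x - y‖ ^ 2 / (2 * s)) ≤ exp (p * (‖x‖ ^ 2 + R ^ 2) / s) := by
  have hyR : ‖y‖ ≤ R := (mem_ball_zero_iff.mp hy).le
  calc exp (p * ‖x - y‖ ^ 2 / (2 * s))
      ≤ exp (p * (2 * (‖x‖ ^ 2 + ‖y‖ ^ 2)) / (2 * s)) := by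
        gcongr; exact norm_sub_sq_le_two_mul x y
    _ = exp (p * (‖x‖ ^ 2 + ‖y‖ ^ 2) / s) := by
        rw [mul_left_comm, mul_div_mul_left _ _ two_ne_zero]
    _ ≤ exp (p * (‖x‖ ^ 2 + R ^ 2) / s) := by gcongr

variable [MeasurableSpace E] [OpensMeasurableSpace E] {ν : Measure E}

theorem mul_measureReal_ball_le_of_harnack {a : ℝ} (x : E) (hp : 0 ≤ p) (hs : 0 ≤ s)
    (ha : 0 ≤ a) (hball : ν (Metric.ball 0 R) ≠ ⊤) (hv : Integrable v ν)
    (hav : ∀ y, a ≤ v y * exp (p * ‖x - y‖ ^ 2 / (2 * s))) :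
    a * ν.real (Metric.ball 0 R) ≤ exp (p * (‖x‖ ^ 2 + R ^ 2) / s) * ∫ y, v y ∂ν := by
  set A := exp (p * (‖x‖ ^ 2 + R ^ 2) / s)
  have hv_nonneg (y : E) : 0 ≤ v y :=
    nonneg_of_mul_nonneg_left (ha.trans (hav y)) (exp_pos _)
  have ha_le : ∀ y ∈ Metric.ball 0 R, a ≤ A * v y := fun y hy =>
    calc a ≤ v y * exp (p * ‖x - y‖ ^ 2 / (2 * s)) := hav y
      _ ≤ v y * A :=
        mul_le_mul_of_nonneg_left (exp_norm_sub_sq_le_of_mem_ball hp hs x hy) (hv_nonneg y)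
      _ = A * v y := mul_comm _ _
  calc a * ν.real (Metric.ball 0 R)
      ≤ ∫ y in Metric.ball 0 R, A * v y ∂ν :=
        setIntegral_ge_of_const_le_real Metric.isOpen_ball.measurableSet hball ha_le
          (hv.const_mul A).integrableOn
    _ ≤ ∫ y, A * v y ∂ν :=
        setIntegral_le_integral (hv.const_mul A)
          (.of_forall fun y => mul_nonneg (exp_pos _).le (hv_nonneg y))
    _ = A * ∫ y, v y ∂ν := integral_const_mul A v

theorem abs_le_of_harnack {a : ℝ} (x : E) (hp : 0 < p) (hs : 0 ≤ s)
    (hν : (2 : ℝ) ^ (-p) < ν.real (Metric.ball 0 R)) (hv : Integrable v ν)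
    (hav : ∀ y, |a| ^ p ≤ v y * exp (p * ‖x - y‖ ^ 2 / (2 * s))) :
    |a| ≤ 2 * (∫ y, v y ∂ν) ^ (1 / p) * exp ((‖x‖ ^ 2 + R ^ 2) / s) := by
  have hball : ν (Metric.ball 0 R) ≠ ⊤ :=
    (ENNReal.toReal_pos_iff.mp ((rpow_pos_of_pos two_pos _).trans hν)).2.ne
  have hI : 0 ≤ ∫ y, v y ∂ν :=
    integral_nonneg fun y => nonneg_of_abs_rpow_le_mul_exp (hav y)
  have hpow : |a| ^ p ≤ 2 ^ p * (∫ y, v y ∂ν) * exp (p * ((‖x‖ ^ 2 + R ^ 2) / s)) :=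
    calc |a| ^ p = 2 ^ p * (|a| ^ p * 2 ^ (-p)) := by
          rw [rpow_neg two_pos.le, mul_left_comm, mul_inv_cancel₀ (by positivity), mul_one]
      _ ≤ 2 ^ p * (|a| ^ p * ν.real (Metric.ball 0 R)) := by gcongr
      _ ≤ 2 ^ p * (exp (p * (‖x‖ ^ 2 + R ^ 2) / s) * ∫ y, v y ∂ν) := by
          gcongr ?_ * ?_
          exact mul_measureReal_ball_le_of_harnack x hp.le hs (by positivity) hball hv hav
      _ = _ := by rw [← mul_div_assoc]; ring
  calc |a| ≤ (2 ^ p * ∫ y, v y ∂ν) ^ (1 / p) * exp ((‖x‖ ^ 2 + R ^ 2) / s) :=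
        abs_le_of_abs_rpow_le_mul_exp hp hpow
    _ = _ := by
        rw [mul_rpow (by positivity) hI, ← rpow_mul two_pos.le, mul_one_div_cancel hp.ne',
          rpow_one]

theorem abs_rpow_le_of_harnack {a : ℝ} (x : E) (hp : 0 < p) (hq : 0 ≤ q) (hs : 0 ≤ s)
    (hν : (2 : ℝ) ^ (-p) < ν.real (Metric.ball 0 R)) (hv : Integrable v ν)
    (hav : ∀ y, |a| ^ p ≤ v y * exp (p * ‖x - y‖ ^ 2 / (2 * s))) :
    |a| ^ q ≤ 2 ^ q * exp (q * R ^ 2 / s) * ((∫ y, v y ∂ν) ^ (1 / p)) ^ q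
      * exp (q * ‖x‖ ^ 2 / s) := by
  have hI : 0 ≤ ∫ y, v y ∂ν :=
    integral_nonneg fun y => nonneg_of_abs_rpow_le_mul_exp (hav y)
  have hexp : exp ((‖x‖ ^ 2 + R ^ 2) / s) ^ q
      = exp (q * R ^ 2 / s) * exp (q * ‖x‖ ^ 2 / s) := by
    rw [← exp_mul, ← exp_add]
    ring_nf
  calc |a| ^ q ≤ (2 * (∫ y, v y ∂ν) ^ (1 / p) * exp ((‖x‖ ^ 2 + R ^ 2) / s)) ^ q := by
        gcongr; exact abs_le_of_harnack x hp hs hν hv hav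
    _ = 2 ^ q * ((∫ y, v y ∂ν) ^ (1 / p)) ^ q
          * (exp (q * R ^ 2 / s) * exp (q * ‖x‖ ^ 2 / s)) := by
        rw [mul_rpow (by positivity) (exp_pos _).le, mul_rpow two_pos.le (by positivity), hexp]
    _ = _ := by ring

theorem lintegral_abs_rpow_le_of_harnack (hp : 0 < p) (hq : 0 ≤ q) (hs : 0 ≤ s)
    (hν : (2 : ℝ) ^ (-p) < ν.real (Metric.ball 0 R))
    (hmoment : ∫⁻ x, ENNReal.ofReal (exp (q * ‖x‖ ^ 2 / s)) ∂ν ≤ ENNReal.ofReal M)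
    (hv : Integrable v ν)
    (huv : ∀ x y, |u x| ^ p ≤ v y * exp (p * ‖x - y‖ ^ 2 / (2 * s))) :
    ∫⁻ x, ENNReal.ofReal (|u x| ^ q) ∂ν
      ≤ ENNReal.ofReal (2 ^ q * exp (q * R ^ 2 / s) * M * ((∫ y, v y ∂ν) ^ (1 / p)) ^ q) := by
  have hI : 0 ≤ ∫ y, v y ∂ν :=
    integral_nonneg fun y => nonneg_of_abs_rpow_le_mul_exp (huv y y)
  set D := 2 ^ q * exp (q * R ^ 2 / s) * ((∫ y, v y ∂ν) ^ (1 / p)) ^ q with hD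
  have hD_nonneg : 0 ≤ D := by positivity
  calc ∫⁻ x, ENNReal.ofReal (|u x| ^ q) ∂ν
      ≤ ∫⁻ x, ENNReal.ofReal D * ENNReal.ofReal (exp (q * ‖x‖ ^ 2 / s)) ∂ν :=
        lintegral_mono fun x => by
          rw [← ENNReal.ofReal_mul hD_nonneg]
          exact ENNReal.ofReal_le_ofReal (abs_rpow_le_of_harnack x hp hq hs hν hv (huv x))
    _ = ENNReal.ofReal D * ∫⁻ x, ENNReal.ofReal (exp (q * ‖x‖ ^ 2 / s)) ∂ν :=
        lintegral_const_mul' _ _ ENNReal.ofReal_ne_top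
    _ ≤ ENNReal.ofReal D * ENNReal.ofReal M := by gcongr
    _ = _ := by rw [← ENNReal.ofReal_mul hD_nonneg, hD, mul_right_comm _ M]

theorem integrable_of_abs_rpow_le_mul_exp_norm_sq {C : ℝ} (hp : 0 < p) (hq : 1 / 2 ≤ q)
    (hs : 0 ≤ s) (hmoment : ∫⁻ x, ENNReal.ofReal (exp (q * ‖x‖ ^ 2 / s)) ∂ν ≠ ⊤)
    (hu : AEStronglyMeasurable u ν)
    (huC : ∀ x, |u x| ^ p ≤ C * exp (p * ‖x‖ ^ 2 / (2 * s))) :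
    Integrable u ν := by
  have hexp : Integrable (fun x => exp (q * ‖x‖ ^ 2 / s)) ν :=
    (lintegral_ofReal_ne_top_iff_integrable (Measurable.aestronglyMeasurable (by fun_prop))
      (.of_forall fun x => (exp_pos _).le)).mp hmoment
  have hC : 0 ≤ C := nonneg_of_abs_rpow_le_mul_exp (huC 0)
  refine (hexp.const_mul (C ^ (1 / p))).mono' hu (.of_forall fun x => ?_)
  have hux : |u x| ^ p ≤ C * exp (p * (1 / 2 * ‖x‖ ^ 2 / s)) := by
    convert huC x using 3
    ring
  calc ‖u x‖ ≤ C ^ (1 / p) * exp (1 / 2 * ‖x‖ ^ 2 / s) := abs_le_of_abs_rpow_le_mul_exp hp hux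
    _ ≤ C ^ (1 / p) * exp (q * ‖x‖ ^ 2 / s) := by gcongr

theorem Lq_bound_from_harnack_general (hp : 0 < p) (hq : 1 / 2 ≤ q) (hs : 0 < s)
    (hν : (2 : ℝ) ^ (-p) < ν.real (Metric.ball 0 R))
    (hmoment : ∫⁻ x, ENNReal.ofReal (exp (q * ‖x‖ ^ 2 / s)) ∂ν ≤ ENNReal.ofReal M)
    {S : Set (E → ℝ)} (hS : ∀ f ∈ S, (fun z => |f z| ^ p) ∈ S) {T : (E → ℝ) → E → ℝ}
    (hTmeas : ∀ f ∈ S, AEStronglyMeasurable (T f) ν)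
    (hHarnack : ∀ f ∈ S, ∀ x y,
      |T f x| ^ p ≤ T (fun z => |f z| ^ p) y * exp (p * ‖x - y‖ ^ 2 / (2 * s)))
    {f : E → ℝ} (hf : f ∈ S) :
    ∫⁻ x, ENNReal.ofReal (|T f x| ^ q) ∂ν
      ≤ ENNReal.ofReal (2 ^ q * exp (q * R ^ 2 / s) * M
          * ((∫ y, T (fun z => |f z| ^ p) y ∂ν) ^ (1 / p)) ^ q) :=
  have hfp := hS f hf
  have hTfp : Integrable (T fun z => |f z| ^ p) ν :=
    integrable_of_abs_rpow_le_mul_exp_norm_sq hp hq hs.le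
      (hmoment.trans_lt ENNReal.ofReal_lt_top).ne (hTmeas _ hfp)
      fun x => by simpa only [sub_zero] using hHarnack _ hfp x 0
  lintegral_abs_rpow_le_of_harnack hp (by linarith) hs.le hν hmoment hTfp (hHarnack f hf)

end Harnack

theorem Cb.abs_rpow {d : ℕ} {f : EuclideanSpace ℝ (Fin d) → ℝ} {p : ℝ} (hf : Cb f)
    (hp : 0 ≤ p) : Cb (fun z => |f z| ^ p) := by
  obtain ⟨hcont, C, hC⟩ := hf
  refine ⟨hcont.abs.rpow_const fun _ => .inr hp, C ^ p, fun x => ?_⟩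
  rw [abs_of_nonneg (by positivity)]
  exact Real.rpow_le_rpow (abs_nonneg _) (hC x) hp

/-- under the Harnack-type inequality and the invariance property, if
moreover `∫ exp(q|x|²/(2η₀(p−1)τ)) dν ≤ M` and `ν(B(0,R)) > 2^{-p}`, then
`∫ |Tf|^q dν ≤ 2^q exp(qR²/(2η₀(p−1)τ)) M ‖f‖_{p,μ}^q` for every `f ∈ C_b`. -/
theorem Lq_bound_from_harnack
    {d : ℕ} (μ ν : Measure (EuclideanSpace ℝ (Fin d)))
    [IsProbabilityMeasure μ] [IsProbabilityMeasure ν]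
    (p q η₀ τ R M : ℝ) (hp : 1 < p) (hpq : p < q) (hη₀ : 0 < η₀) (hτ : 0 < τ)
    (hR : 0 < R) (hM : 0 < M)
    (hν : (2 : ℝ) ^ (-p) < (ν (Metric.ball 0 R)).toReal)
    (hmoment : ∫⁻ x, ENNReal.ofReal
        (Real.exp (q * ‖x‖ ^ 2 / (2 * η₀ * (p - 1) * τ))) ∂ν ≤ ENNReal.ofReal M)
    (T : (EuclideanSpace ℝ (Fin d) → ℝ) → (EuclideanSpace ℝ (Fin d) → ℝ))
    (hTmeas : ∀ f, Cb f → Measurable (T f))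
    (hHarnack : ∀ f, Cb f → ∀ x y : EuclideanSpace ℝ (Fin d),
      |T f x| ^ p ≤ T (fun z => |f z| ^ p) y
        * Real.exp (p * ‖x - y‖ ^ 2 / (4 * (p - 1) * η₀ * τ)))
    (hinv : ∀ g, Cb g → (∀ x, 0 ≤ g x) →
      ∫ x, T g x ∂ν = ∫ x, g x ∂μ) :
    ∀ f, Cb f →
      ∫⁻ x, ENNReal.ofReal (|T f x| ^ q) ∂ν
        ≤ ENNReal.ofReal (2 ^ q * Real.exp (q * R ^ 2 / (2 * η₀ * (p - 1) * τ)) * M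
            * ((∫ z, |f z| ^ p ∂μ) ^ (1 / p)) ^ q) := by
  intro f hf
  have hp₀ : 0 < p := one_pos.trans hp
  have hs : 0 < 2 * η₀ * (p - 1) * τ := by have := sub_pos.mpr hp; positivity
  have hscale : 4 * (p - 1) * η₀ * τ = 2 * (2 * η₀ * (p - 1) * τ) := by ring
  rw [← hinv _ (hf.abs_rpow hp₀.le) fun x => by positivity]
  exact Lq_bound_from_harnack_general (S := {g | Cb g}) hp₀ (by linarith) hs hν hmoment
    (fun g hg => hg.abs_rpow hp₀.le) (fun g hg => (hTmeas g hg).aestronglyMeasurable)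
    (fun g hg => by simpa only [hscale] using hHarnack g hg) hf
end

section
/- Let μ and ν be Borel probability measures on ℝ^d and let k : ℝ^d × ℝ^d → (0,∞) be Borel measurable with ∫_{ℝ^d} k(x,y) dy = 1 for every x ∈ ℝ^d; for bounded Borel g : ℝ^d → ℝ define (Tg)(x) := ∫_{ℝ^d} k(x,y) g(y) dy. Assume: (invariance) ∫_{ℝ^d} Tg dν = ∫_{ℝ^d} g dμ for every bounded Borel g ≥ 0; and, for some 1 < p < q < ∞ and C > 0, ‖Tg‖_{q,ν} ≤ C ‖g‖_{p,μ} for every bounded Borel g. Then for every f ∈ C_b(ℝ^d) with ‖f‖_{2,μ} = 1, ∫_{ℝ^d} T(f²) log(T(f²)) dν ≤ ( q(p−1) / (p(q−1)) ) ∫_{ℝ^d} f² log f² dμ + ( q/(q−1) ) log C, with the convention 0·log 0 = 0. -/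
open MeasureTheory

/-- `g : ℝ^d → ℝ` is bounded and Borel measurable. -/
def BddBorel {d : ℕ} (g : EuclideanSpace ℝ (Fin d) → ℝ) : Prop :=
  Measurable g ∧ ∃ M, ∀ x, |g x| ≤ M

open ProbabilityTheory

/-!
With `h = f²` and `κ(x, dy) = k(x, y) dy`, write `u = ∫ h dκ`, `w = ∫ h^(1/p) dκ` and
`L = ∫ h log h dκ`.
Integrating Young's inequality `a log b ≤ a log a - a + b` against `κ` (Jensen's inequality for the
probability measure `(h / u) dκ`) gives `u log u ≤ (1 - 1/p) L + u log w` pointwise. A second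
application, with `a = u` and `b = (w / C)^q`, trades `u log w` for `u log u` at the price of
`(w / C)^q`, whose integral is at most `1` by the norm bound at `h^(1/p)`. Finally integrate against
`ν`: by invariance `u` and `L` have the integrals of `h` and `h log h` against `μ`.
-/

section Young

lemma mul_log_le_mul_log_sub_add {a b : ℝ} (ha : 0 ≤ a) (hb : 0 ≤ b) (hab : b = 0 → a = 0) :
    a * Real.log b ≤ a * Real.log a - a + b := by
  obtain rfl | ha := ha.eq_or_lt
  · simpa using hb
  have hb : 0 < b := hb.lt_of_ne' fun hzero => ha.ne' (hab hzero)
  have hlog : Real.log b - Real.log a ≤ b / a - 1 := by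
    rw [← Real.log_div hb.ne' ha.ne']
    exact Real.log_le_sub_one_of_pos (div_pos hb ha)
  have hmul := mul_le_mul_of_nonneg_left hlog ha.le
  rw [mul_sub, mul_sub, mul_div_cancel₀ _ ha.ne'] at hmul
  linarith

lemma sub_one_mul_mul_log_le {u w E q C : ℝ} (hu : 0 ≤ u) (hw : 0 ≤ w) (huw : w = 0 → u = 0)
    (hC : 0 < C) (h : u * Real.log u ≤ E + u * Real.log w) (hq : 0 < q) :
    (q - 1) * (u * Real.log u) ≤ q * E + (q * Real.log C - 1) * u + (w / C) ^ q := by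
  obtain rfl | hw := hw.eq_or_lt
  · obtain rfl := huw rfl
    simpa [hq.ne'] using mul_nonneg hq.le (by simpa using h)
  have hwC : 0 < (w / C) ^ q := Real.rpow_pos_of_pos (div_pos hw hC) q
  have young := mul_log_le_mul_log_sub_add hu hwC.le fun hzero => absurd hzero hwC.ne'
  rw [Real.log_rpow (div_pos hw hC), Real.log_div hw.ne' hC.ne'] at young
  linarith [mul_le_mul_of_nonneg_left h hq.le]

end Young

section LogConvexity

variable {α : Type*} [MeasurableSpace α] {μ : Measure α} {h : α → ℝ} {r : ℝ}

lemma ae_eq_zero_of_integral_rpow_eq_zero (h0 : ∀ x, 0 ≤ h x)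
    (hr : Integrable (fun x => h x ^ r) μ) (hzero : ∫ x, h x ^ r ∂μ = 0) : h =ᵐ[μ] 0 := by
  have hae := (integral_eq_zero_iff_of_nonneg (fun x => Real.rpow_nonneg (h0 x) r) hr).mp hzero
  filter_upwards [hae] with x hx
  exact ((Real.rpow_eq_zero_iff_of_nonneg (h0 x)).mp hx).1

lemma integral_mul_log_add_integral_le (h0 : ∀ x, 0 ≤ h x) (hh : Integrable h μ)
    (hlog : Integrable (fun x => h x * Real.log (h x)) μ)
    (hr : Integrable (fun x => h x ^ r) μ) {s : ℝ} (hs : 0 < s) :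
    (∫ x, h x ∂μ) * Real.log s + ∫ x, h x ∂μ ≤
      (1 - r) * ∫ x, h x * Real.log (h x) ∂μ + s * ∫ x, h x ^ r ∂μ := by
  have young (x : α) :
      h x * Real.log s + h x ≤ (1 - r) * (h x * Real.log (h x)) + s * h x ^ r := by
    obtain hx | hx := (h0 x).eq_or_lt
    · simpa [← hx] using mul_nonneg hs.le (Real.rpow_nonneg le_rfl r)
    have hb : 0 < s * h x ^ r := mul_pos hs (Real.rpow_pos_of_pos hx r)
    have := mul_log_le_mul_log_sub_add hx.le hb.le fun hzero => absurd hzero hb.ne'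
    rw [Real.log_mul hs.ne' (Real.rpow_pos_of_pos hx r).ne', Real.log_rpow hx] at this
    linarith
  have := integral_mono ((hh.mul_const _).add hh) ((hlog.const_mul _).add (hr.const_mul _)) young
  simpa only [Pi.add_apply, integral_add (hh.mul_const _) hh,
    integral_add (hlog.const_mul _) (hr.const_mul _), integral_const_mul, integral_mul_const]
    using this

lemma integral_mul_log_integral_le (h0 : ∀ x, 0 ≤ h x) (hh : Integrable h μ)
    (hlog : Integrable (fun x => h x * Real.log (h x)) μ)
    (hr : Integrable (fun x => h x ^ r) μ) :
    (∫ x, h x ∂μ) * Real.log (∫ x, h x ∂μ) ≤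
      (1 - r) * ∫ x, h x * Real.log (h x) ∂μ +
        (∫ x, h x ∂μ) * Real.log (∫ x, h x ^ r ∂μ) := by
  have hu : 0 ≤ ∫ x, h x ∂μ := integral_nonneg h0
  have hw : 0 ≤ ∫ x, h x ^ r ∂μ := integral_nonneg fun x => Real.rpow_nonneg (h0 x) r
  obtain hu | hu := hu.eq_or_lt
  · have hae : h =ᵐ[μ] 0 := (integral_eq_zero_iff_of_nonneg h0 hh).mp hu.symm
    have hlog0 : ∫ x, h x * Real.log (h x) ∂μ = 0 :=
      integral_eq_zero_of_ae (by filter_upwards [hae] with x hx; simp [hx])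
    simp [← hu, hlog0]
  have hw : 0 < ∫ x, h x ^ r ∂μ := hw.lt_of_ne' fun hzero =>
    hu.ne' (integral_eq_zero_of_ae (ae_eq_zero_of_integral_rpow_eq_zero h0 hr hzero))
  -- `s = ∫ h / ∫ h ^ r` is the choice that makes the integrated Young inequality sharpest.
  have key := integral_mul_log_add_integral_le h0 hh hlog hr (div_pos hu hw)
  rw [Real.log_div hu.ne' hw.ne', div_mul_cancel₀ _ hw.ne'] at key
  linarith

end LogConvexity

lemma integral_div_rpow_le_one {α : Type*} [MeasurableSpace α] {μ : Measure α} {w : α → ℝ}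
    {q C : ℝ} (hw : ∀ x, 0 ≤ w x) (hq : 0 < q) (hC : 0 < C)
    (h : (∫ x, w x ^ q ∂μ) ^ (1 / q) ≤ C) : ∫ x, (w x / C) ^ q ∂μ ≤ 1 := by
  have hint : 0 ≤ ∫ x, w x ^ q ∂μ := integral_nonneg fun x => Real.rpow_nonneg (hw x) q
  rw [one_div, Real.rpow_inv_le_iff_of_pos hint hC.le hq] at h
  simp_rw [Real.div_rpow (hw _) hC.le, integral_div]
  exact div_le_one_of_le₀ h (Real.rpow_nonneg hC.le q)

/-- Bounded measurable real functions: `BddBorel` on an arbitrary measurable space. The bound holds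
everywhere, not just almost everywhere, so that it is available for every measure of a kernel. -/
def IsBoundedMeasurable {α : Type*} [MeasurableSpace α] (g : α → ℝ) : Prop :=
  Measurable g ∧ ∃ M, ∀ x, |g x| ≤ M

namespace IsBoundedMeasurable

variable {α β : Type*} [MeasurableSpace α] [MeasurableSpace β] {g : α → ℝ}

lemma continuous_comp (hg : IsBoundedMeasurable g) {F : ℝ → ℝ} (hF : Continuous F) :
    IsBoundedMeasurable fun x => F (g x) := by
  obtain ⟨hgm, M, hM⟩ := hg
  obtain ⟨B, hB⟩ := (isCompact_Icc (a := -M) (b := M)).exists_bound_of_continuousOn hF.continuousOn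
  exact ⟨hF.measurable.comp hgm, B, fun x => hB _ (abs_le.mp (hM x))⟩

lemma mul_log (hg : IsBoundedMeasurable g) :
    IsBoundedMeasurable fun x => g x * Real.log (g x) :=
  hg.continuous_comp Real.continuous_mul_log

lemma rpow (hg : IsBoundedMeasurable g) {r : ℝ} (hr : 0 ≤ r) :
    IsBoundedMeasurable fun x => g x ^ r :=
  hg.continuous_comp (Real.continuous_rpow_const hr)

lemma integrable (hg : IsBoundedMeasurable g) (μ : Measure α) [IsFiniteMeasure μ] :
    Integrable g μ :=
  let ⟨hgm, M, hM⟩ := hg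
  .of_bound hgm.aestronglyMeasurable M (.of_forall hM)

lemma integral_kernel {g : β → ℝ} (hg : IsBoundedMeasurable g) (κ : Kernel α β)
    [IsFiniteKernel κ] : IsBoundedMeasurable fun x => ∫ y, g y ∂κ x := by
  obtain ⟨hgm, M, hM⟩ := hg
  refine ⟨hgm.stronglyMeasurable.integral_kernel.measurable, |M| * κ.bound.toReal, fun x => ?_⟩
  calc |∫ y, g y ∂κ x| ≤ |M| * (κ x).real Set.univ := by
        rw [← Real.norm_eq_abs (∫ y, g y ∂κ x)]
        exact norm_integral_le_of_norm_le_const (.of_forall fun y => (hM y).trans (le_abs_self M))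
    _ ≤ |M| * κ.bound.toReal := by
        gcongr
        exact ENNReal.toReal_mono κ.bound_ne_top (κ.measure_le_bound x Set.univ)

end IsBoundedMeasurable

section DensityKernel

variable {α β : Type*} [MeasurableSpace α] [MeasurableSpace β]

/-- The kernel `x ↦ k x y m(dy)` with density `k` with respect to a fixed measure `m`, which turns
the integral operator `g ↦ ∫ k(·, y) g(y) m(dy)` into integration against a kernel. Negative values
of `k` are truncated to `0`, and the kernel is `0` if `k` is not jointly measurable. -/
noncomputable def densityKernel (m : Measure β) [SFinite m] (k : α → β → ℝ) : Kernel α β :=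
  (Kernel.const α m).withDensity fun x y => (k x y).toNNReal

variable {m : Measure β} [SFinite m] {k : α → β → ℝ}

lemma integral_densityKernel (hk : Measurable (Function.uncurry k)) (hk0 : ∀ x y, 0 ≤ k x y)
    (g : β → ℝ) (x : α) : ∫ y, g y ∂densityKernel m k x = ∫ y, k x y * g y ∂m := by
  rw [densityKernel, Kernel.integral_withDensity hk.real_toNNReal, Kernel.const_apply]
  simp only [NNReal.smul_def, Real.coe_toNNReal _ (hk0 x _), smul_eq_mul]

lemma isMarkovKernel_densityKernel (hk : Measurable (Function.uncurry k))
    (hk0 : ∀ x y, 0 ≤ k x y) (hk1 : ∀ x, ∫ y, k x y ∂m = 1) :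
    IsMarkovKernel (densityKernel m k) := by
  refine ⟨fun x => ⟨?_⟩⟩
  have hreal : (densityKernel m k x).real Set.univ = 1 := by
    simpa [hk1] using integral_densityKernel (m := m) hk hk0 1 x
  exact (ENNReal.toReal_eq_one_iff _).mp hreal

end DensityKernel

section Kernel

variable {α β : Type*} [MeasurableSpace α] [MeasurableSpace β]

lemma integral_comp_measure {κ : Kernel α β} {ν : Measure α} {g : β → ℝ}
    (hg : Integrable g (κ ∘ₘ ν)) : ∫ y, g y ∂(κ ∘ₘ ν) = ∫ x, ∫ y, g y ∂κ x ∂ν := by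
  rw [Measure.comp_eq_comp_const_apply] at hg ⊢
  rw [Kernel.integral_comp hg, Kernel.const_apply]

lemma comp_eq_of_forall_integral_eq {κ : Kernel α β} [IsFiniteKernel κ] {ν : Measure α}
    [IsFiniteMeasure ν] {μ : Measure β} [IsFiniteMeasure μ]
    (h : ∀ g : β → ℝ, IsBoundedMeasurable g → (∀ y, 0 ≤ g y) →
      ∫ x, ∫ y, g y ∂κ x ∂ν = ∫ y, g y ∂μ) :
    κ ∘ₘ ν = μ := by
  ext s hs
  have hg : IsBoundedMeasurable (s.indicator (1 : β → ℝ)) :=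
    ⟨measurable_one.indicator hs, 1, fun y => by by_cases hy : y ∈ s <;> simp [hy]⟩
  have hs_eq := h _ hg (Set.indicator_nonneg fun _ _ => zero_le_one)
  rw [← integral_comp_measure (hg.integrable _), integral_indicator_one hs,
    integral_indicator_one hs] at hs_eq
  exact (measureReal_eq_measureReal_iff).mp hs_eq

lemma integral_rpow_kernel_le {κ : Kernel α β} {ν : Measure α} {μ : Measure β} {p q C : ℝ}
    (hp : 0 < p) {h : β → ℝ} (h0 : ∀ y, 0 ≤ h y) (h1 : ∫ y, h y ∂μ = 1)
    (hbound : (∫ x, |∫ y, h y ^ (1 / p) ∂κ x| ^ q ∂ν) ^ (1 / q) ≤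
      C * (∫ y, |h y ^ (1 / p)| ^ p ∂μ) ^ (1 / p)) :
    (∫ x, (∫ y, h y ^ (1 / p) ∂κ x) ^ q ∂ν) ^ (1 / q) ≤ C := by
  have hr (y) : 0 ≤ h y ^ (1 / p) := Real.rpow_nonneg (h0 y) _
  have hpow (y) : (h y ^ (1 / p)) ^ p = h y := by
    rw [one_div, Real.rpow_inv_rpow (h0 y) hp.ne']
  simpa only [abs_of_nonneg (integral_nonneg (f := fun y => h y ^ (1 / p)) hr),
    abs_of_nonneg (hr _), hpow, h1, Real.one_rpow, mul_one] using hbound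

lemma sub_one_mul_integral_mul_log_integral_le {P : Measure β} [IsFiniteMeasure P] {h : β → ℝ}
    (hh : IsBoundedMeasurable h) (h0 : ∀ y, 0 ≤ h y) {r q C : ℝ} (hr : 0 ≤ r) (hq : 0 < q)
    (hC : 0 < C) :
    (q - 1) * ((∫ y, h y ∂P) * Real.log (∫ y, h y ∂P)) ≤
      q * ((1 - r) * ∫ y, h y * Real.log (h y) ∂P) + (q * Real.log C - 1) * ∫ y, h y ∂P +
        ((∫ y, h y ^ r ∂P) / C) ^ q :=
  sub_one_mul_mul_log_le (integral_nonneg h0)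
    (integral_nonneg fun y => Real.rpow_nonneg (h0 y) r)
    (fun hw => integral_eq_zero_of_ae
      (ae_eq_zero_of_integral_rpow_eq_zero h0 ((hh.rpow hr).integrable P) hw)) hC
    (integral_mul_log_integral_le h0 (hh.integrable P) (hh.mul_log.integrable P)
      ((hh.rpow hr).integrable P)) hq

lemma sub_one_mul_integral_kernel_entropy_le {κ : Kernel α β} [IsFiniteKernel κ] {ν : Measure α}
    [IsFiniteMeasure ν] {h : β → ℝ} (hh : IsBoundedMeasurable h) (h0 : ∀ y, 0 ≤ h y)
    {r q C : ℝ} (hr : 0 ≤ r) (hq : 0 < q) (hC : 0 < C) :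
    (q - 1) * ∫ x, (∫ y, h y ∂κ x) * Real.log (∫ y, h y ∂κ x) ∂ν ≤
      q * ((1 - r) * ∫ y, h y * Real.log (h y) ∂(κ ∘ₘ ν)) +
        (q * Real.log C - 1) * ∫ y, h y ∂(κ ∘ₘ ν) +
        ∫ x, ((∫ y, h y ^ r ∂κ x) / C) ^ q ∂ν := by
  have hu := hh.integral_kernel κ
  have hL := ((hh.mul_log.integral_kernel κ).integrable ν).const_mul (1 - r) |>.const_mul q
  have hu_mul := (hu.integrable ν).const_mul (q * Real.log C - 1)
  have hw : Integrable (fun x => ((∫ y, h y ^ r ∂κ x) / C) ^ q) ν :=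
    (((hh.rpow hr).integral_kernel κ).continuous_comp
      ((Real.continuous_rpow_const hq.le).comp (continuous_id.div_const C))).integrable ν
  have key := integral_mono ((hu.mul_log.integrable ν).const_mul (q - 1)) ((hL.add hu_mul).add hw)
    fun x => sub_one_mul_integral_mul_log_integral_le (P := κ x) hh h0 hr hq hC
  rw [integral_add' (hL.add hu_mul) hw, integral_add' hL hu_mul] at key
  simpa only [integral_const_mul, integral_comp_measure (hh.integrable _),
    integral_comp_measure (hh.mul_log.integrable _)] using key

theorem entropy_bound_of_kernel_operator_general {κ : Kernel α β} [IsFiniteKernel κ]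
    {ν : Measure α} [IsFiniteMeasure ν] {μ : Measure β} (hinv : κ ∘ₘ ν = μ)
    {p q C : ℝ} (hp : 0 < p) (hq : 1 < q) (hC : 0 < C)
    (hbound : ∀ g : β → ℝ, IsBoundedMeasurable g →
      (∫ x, |∫ y, g y ∂κ x| ^ q ∂ν) ^ (1 / q) ≤ C * (∫ y, |g y| ^ p ∂μ) ^ (1 / p))
    {h : β → ℝ} (hh : IsBoundedMeasurable h) (h0 : ∀ y, 0 ≤ h y) (h1 : ∫ y, h y ∂μ = 1) :
    ∫ x, (∫ y, h y ∂κ x) * Real.log (∫ y, h y ∂κ x) ∂ν ≤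
      (q * (p - 1) / (p * (q - 1))) * ∫ y, h y * Real.log (h y) ∂μ
        + (q / (q - 1)) * Real.log C := by
  subst hinv
  have hq0 : 0 < q := zero_lt_one.trans hq
  have hp_inv : 0 ≤ 1 / p := one_div_nonneg.mpr hp.le
  have hw : ∫ x, ((∫ y, h y ^ (1 / p) ∂κ x) / C) ^ q ∂ν ≤ 1 :=
    integral_div_rpow_le_one
      (fun x => integral_nonneg fun y => Real.rpow_nonneg (h0 y) _) hq0 hC
      (integral_rpow_kernel_le hp h0 h1 (hbound _ (hh.rpow hp_inv)))
  have key := sub_one_mul_integral_kernel_entropy_le (κ := κ) (ν := ν) hh h0 hp_inv hq0 hC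
  rw [h1, mul_one] at key
  calc ∫ x, (∫ y, h y ∂κ x) * Real.log (∫ y, h y ∂κ x) ∂ν
      ≤ (q * ((1 - 1 / p) * ∫ y, h y * Real.log (h y) ∂(κ ∘ₘ ν)) + q * Real.log C) / (q - 1) := by
        rw [le_div_iff₀' (sub_pos.mpr hq)]
        linarith
    _ = q * (p - 1) / (p * (q - 1)) * ∫ y, h y * Real.log (h y) ∂(κ ∘ₘ ν)
          + q / (q - 1) * Real.log C := by
        field_simp

end Kernel

/-- for a positive normalized kernel operator
`(Tg)(x) = ∫ k(x,y) g(y) dy` satisfying the invariance `∫ Tg dν = ∫ g dμ` (for bounded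
Borel `g ≥ 0`) and the bound `‖Tg‖_{q,ν} ≤ C‖g‖_{p,μ}`, every `f ∈ C_b(ℝ^d)` with
`‖f‖_{2,μ} = 1` satisfies
`∫ T(f²) log T(f²) dν ≤ (q(p−1)/(p(q−1))) ∫ f² log f² dμ + (q/(q−1)) log C`. -/
theorem entropy_bound_of_kernel_operator
    {d : ℕ} (μ ν : Measure (EuclideanSpace ℝ (Fin d)))
    [IsProbabilityMeasure μ] [IsProbabilityMeasure ν]
    (k : EuclideanSpace ℝ (Fin d) → EuclideanSpace ℝ (Fin d) → ℝ)
    (hkmeas : Measurable (Function.uncurry k))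
    (hkpos : ∀ x y, 0 < k x y)
    (hknorm : ∀ x, ∫ y, k x y = 1)
    (p q C : ℝ) (hp : 1 < p) (hpq : p < q) (hC : 0 < C)
    (hinv : ∀ g : EuclideanSpace ℝ (Fin d) → ℝ, BddBorel g → (∀ x, 0 ≤ g x) →
      ∫ x, (∫ y, k x y * g y) ∂ν = ∫ x, g x ∂μ)
    (hbound : ∀ g : EuclideanSpace ℝ (Fin d) → ℝ, BddBorel g →
      (∫ x, |∫ y, k x y * g y| ^ q ∂ν) ^ (1 / q)
        ≤ C * (∫ x, |g x| ^ p ∂μ) ^ (1 / p)) :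
    ∀ f : EuclideanSpace ℝ (Fin d) → ℝ, Cb f →
      (∫ x, |f x| ^ (2 : ℝ) ∂μ) ^ ((1 : ℝ) / 2) = 1 →
      ∫ x, (∫ y, k x y * (f y) ^ 2) * Real.log (∫ y, k x y * (f y) ^ 2) ∂ν
        ≤ (q * (p - 1) / (p * (q - 1))) * ∫ x, (f x) ^ 2 * Real.log ((f x) ^ 2) ∂μ
          + (q / (q - 1)) * Real.log C := by
  intro f hf hnorm
  have hk0 (x y) : 0 ≤ k x y := (hkpos x y).le
  have := isMarkovKernel_densityKernel hkmeas hk0 hknorm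
  have hf1 : ∫ x, f x ^ 2 ∂μ = 1 := by
    simpa only [Real.rpow_two, sq_abs, ← Real.sqrt_eq_rpow, Real.sqrt_eq_one] using hnorm
  simp_rw [← integral_densityKernel hkmeas hk0] at hinv hbound ⊢
  have hf2 : IsBoundedMeasurable fun x => f x ^ 2 :=
    IsBoundedMeasurable.continuous_comp ⟨hf.1.measurable, hf.2⟩ (continuous_pow 2)
  exact entropy_bound_of_kernel_operator_general (comp_eq_of_forall_integral_eq hinv)
    (zero_lt_one.trans hp) (hp.trans hpq) hC hbound hf2 (fun x => sq_nonneg (f x)) hf1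
end
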